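/- arXiv:1301.5798 — 4 statements merged into one kernel-verified Lean document; each statement's English description precedes it below -/
import Mathlib

section
/- If the Toeplitz matrix T is invertible, then the only syzygy (p,q,r) ∈ ML(T̃(x), x^n, x^{2n}−1) whose three components all have degree ≤ n−1 is (0,0,0); equivalently, the k-linear map k[x]_{n−1}^3 → k[x]_{3n−1}, (p,q,r) ↦ T̃(x)p(x) + x^n q(x) + (x^{2n}−1)r(x), is injective. -/
open Polynomial

/-!
Write `p = ∑ p_j x^j`. Since `x^n q` only has terms of degree `n, …, 2n-1`, comparing the
coefficients of `x^m` and `x^(2n+m)` for `m < n` in the syzygy relation gives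
`(T̃ p)_m = r_m` and `(T̃ p)_(2n+m) = -r_m`. The sum `(T̃ p)_m + (T̃ p)_(2n+m)` is the `m`-th
coefficient of `T̃ p` folded modulo `x^(2n) - 1`, which is the `m`-th entry of `T · (p_j)_j`: the
indices `j ≤ m` contribute through the first summand, the indices `j > m` through the second.
Hence `T · (p_j)_j = 0`, so `p = 0`; then `r_m = 0` for all `m < n`, and finally `x^n q = 0`.
-/

/-- The coefficients of a product whose second factor has degree `< n`, as a sum over an index
range that does not depend on the coefficient looked at. -/
lemma coeff_mul_of_degree_lt {k : Type*} [Field k] {n : ℕ} (f p : k[X]) (hp : p.degree < (n : ℕ))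
    (d : ℕ) :
    (f * p).coeff d = ∑ j ∈ Finset.range n, if j ≤ d then f.coeff (d - j) * p.coeff j else 0 := by
  have hsum : p = ∑ j ∈ Finset.range n, C (p.coeff j) * X ^ j := by
    ext i
    simp only [finsetSum_coeff, coeff_C_mul_X_pow, Finset.sum_ite_eq, Finset.mem_range]
    split_ifs with h
    · rfl
    · exact coeff_eq_zero_of_degree_lt (hp.trans_le (by exact_mod_cast not_lt.mp h))
  conv_lhs => rw [hsum]
  rw [Finset.mul_sum, finsetSum_coeff]
  refine Finset.sum_congr rfl fun j _ => ?_
  rw [← mul_assoc, coeff_mul_X_pow', coeff_mul_C]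

/-- if `T` is invertible, there are no nonzero syzygies of
`(T̃(x), x^n, x^{2n}-1)` with all components of degree ≤ n-1. -/
theorem stmt5 (k : Type*) [Field k] (n : ℕ) (hn : 1 ≤ n) (t : ℤ → k)
    (T : Matrix (Fin n) (Fin n) k) (hT : ∀ i j : Fin n, T i j = t ((i : ℤ) - (j : ℤ)))
    (Ttil : Polynomial k)
    (hTtil : Ttil = (∑ i ∈ Finset.range n, Polynomial.C (t (i : ℤ)) * Polynomial.X ^ i)
      + ∑ i ∈ Finset.Ico n (2 * n), Polynomial.C (t ((i : ℤ) - 2 * n)) * Polynomial.X ^ i)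
    (hTinv : IsUnit T) :
    ∀ p q r : Polynomial k, p.degree < (n : ℕ) → q.degree < (n : ℕ) → r.degree < (n : ℕ) →
      Ttil * p + X ^ n * q + (X ^ (2 * n) - 1) * r = 0 →
      p = 0 ∧ q = 0 ∧ r = 0 := by
  intro p q r hp hq hr h
  have coeff_zero : ∀ {f : k[X]}, f.degree < (n : ℕ) → ∀ d, n ≤ d → f.coeff d = 0 :=
    fun hf d hd => coeff_eq_zero_of_degree_lt (hf.trans_le (by exact_mod_cast hd))
  have hc : ∀ d, Ttil.coeff d =
      (if d < n then t d else 0) + if n ≤ d ∧ d < 2 * n then t ((d : ℤ) - 2 * n) else 0 := by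
    intro d
    simp only [hTtil, coeff_add, finsetSum_coeff, coeff_C_mul_X_pow, Finset.sum_ite_eq,
      Finset.mem_range, Finset.mem_Ico]
  have low : ∀ m < n, (Ttil * p).coeff m = r.coeff m := by
    intro m hm
    have := congrArg (fun f => coeff f m) h
    simp only [coeff_add, coeff_X_pow_mul', sub_mul, one_mul, coeff_sub,
      Polynomial.coeff_zero] at this
    rw [if_neg (by omega), if_neg (by omega)] at this
    linear_combination this
  have high : ∀ m < n, (Ttil * p).coeff (2 * n + m) = -r.coeff m := by
    intro m hm
    have := congrArg (fun f => coeff f (2 * n + m)) h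
    simp only [coeff_add, coeff_X_pow_mul', sub_mul, one_mul, coeff_sub,
      Polynomial.coeff_zero] at this
    rw [if_pos (by omega), if_pos (by omega), coeff_zero hq _ (by omega),
      coeff_zero hr (2 * n + m) (by omega), Nat.add_sub_cancel_left] at this
    linear_combination this
  have hker : T.mulVec (fun j : Fin n => p.coeff j) = 0 := by
    funext m
    have hm := m.2
    have hfold : (Ttil * p).coeff m + (Ttil * p).coeff (2 * n + m) = 0 := by
      rw [low m hm, high m hm, add_neg_cancel]
    rw [coeff_mul_of_degree_lt _ _ hp, coeff_mul_of_degree_lt _ _ hp, ← Finset.sum_add_distrib,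
      Finset.sum_range] at hfold
    rw [Pi.zero_apply, ← hfold]
    simp only [Matrix.mulVec, dotProduct]
    refine Finset.sum_congr rfl fun j _ => ?_
    have hj := j.2
    rw [hT, hc, hc, if_pos (show (j : ℕ) ≤ 2 * n + m by omega)]
    by_cases hjm : (j : ℕ) ≤ m
    · rw [if_pos hjm, if_pos (by omega), if_neg (by omega), if_neg (by omega), if_neg (by omega),
        Nat.cast_sub hjm]
      ring
    · rw [if_neg hjm, if_neg (by omega), if_pos (by omega),
        Nat.cast_sub (show (j : ℕ) ≤ 2 * n + m by omega)]
      have : ((2 * n + (m : ℕ) : ℕ) : ℤ) - (j : ℕ) - 2 * n = (m : ℕ) - (j : ℕ) := by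
        push_cast; ring
      rw [this]
      ring
  have hvec : (fun j : Fin n => p.coeff j) = 0 :=
    Matrix.mulVec_injective_of_isUnit hTinv (by rw [hker, Matrix.mulVec_zero])
  have hp0 : p = 0 := by
    ext d
    rcases lt_or_ge d n with hd | hd
    · exact congrFun hvec ⟨d, hd⟩
    · exact coeff_zero hp d hd
  have hr0 : r = 0 := by
    ext d
    rcases lt_or_ge d n with hd | hd
    · rw [← low d hd, hp0, mul_zero]
    · exact coeff_zero hr d hd
  refine ⟨hp0, ?_, hr0⟩
  simpa [hp0, hr0] using h
end

section
/- For vectors u, g ∈ k^n, the vector u is a solution of the Toeplitz system T·u = g if and only if there exist polynomials v(x), w(x) ∈ k[x] of degree ≤ n−1 such that T̃(x)·u(x) + x^n·v(x) + (x^{2n}−1)·w(x) = g(x). -/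
open Polynomial

/-!
Put `P = T̃·u`, a polynomial of degree `< 3n`. Reducing modulo `x^{2n} - 1` adds the coefficient of
`x^{m+2n}` to that of `x^m`, and the free term `x^n·v` discards the coefficients of index
`n ≤ m < 2n`. Hence the polynomial identity is solvable in `v, w` exactly when
`P_m + P_{m+2n} = g_m` for all `m < n` (`exists_reduction_iff`). By the choice of `T̃`, the entries
`t_{m-j}` with `j ≤ m` contribute to `P_m` and those with `j > m` contribute to `P_{m+2n}`, so
that `P_m + P_{m+2n}` is the `m`-th entry of `T·u` (`coeff_add_coeff`).
-/

lemma exists_reduction_iff {k : Type*} [Field k] (n : ℕ) (P G : k[X])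
    (hP : ∀ m, 3 * n ≤ m → P.coeff m = 0) (hG : ∀ m, n ≤ m → G.coeff m = 0) :
    (∃ v w : k[X], v.degree < (n : ℕ) ∧ w.degree < (n : ℕ) ∧
        P + X ^ n * v + (X ^ (2 * n) - 1) * w = G) ↔
      ∀ m < n, P.coeff m + P.coeff (m + 2 * n) = G.coeff m := by
  constructor
  · rintro ⟨v, w, hv, hw, h⟩ m hm
    rw [degree_lt_iff_coeff_zero] at hv hw
    have h1 := congrArg (fun p => coeff p m) h
    have h2 := congrArg (fun p => coeff p (m + 2 * n)) h
    simp only [coeff_add, sub_mul, one_mul, coeff_sub, coeff_X_pow_mul'] at h1 h2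
    rw [if_neg (by omega), if_neg (by omega)] at h1
    rw [if_pos (by omega), if_pos (by omega), hv _ (by omega), hw (m + 2 * n) (by omega),
      hG _ (by omega), Nat.add_sub_cancel] at h2
    linear_combination h1 + h2
  · intro h
    -- `v` cancels the coefficients `n ≤ m < 2n` of `P`, and `w` those with `2n ≤ m < 3n`.
    have hc : ∀ (a m : ℕ), (∑ i ∈ Finset.range n, C (-P.coeff (i + a)) * X ^ i : k[X]).coeff m
        = if m < n then -P.coeff (m + a) else 0 := by
      intro a m
      simp only [finsetSum_coeff, coeff_C_mul, coeff_X_pow, mul_ite, mul_one, mul_zero,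
        Finset.sum_ite_eq, Finset.mem_range]
    refine ⟨∑ i ∈ Finset.range n, C (-P.coeff (i + n)) * X ^ i,
      ∑ i ∈ Finset.range n, C (-P.coeff (i + 2 * n)) * X ^ i, ?_, ?_, ?_⟩
    · rw [degree_lt_iff_coeff_zero]
      intro m hm
      rw [hc, if_neg (by omega)]
    · rw [degree_lt_iff_coeff_zero]
      intro m hm
      rw [hc, if_neg (by omega)]
    · ext m
      simp only [coeff_add, sub_mul, one_mul, coeff_sub, coeff_X_pow_mul', hc]
      rcases lt_or_ge m n with h1 | h1
      · rw [if_neg (by omega), if_neg (by omega), if_pos h1, ← h m h1]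
        ring
      rw [if_pos h1, if_neg (show ¬ m < n by omega), hG m h1, Nat.sub_add_cancel h1]
      rcases lt_or_ge m (2 * n) with h2 | h2
      · rw [if_pos (by omega), if_neg (by omega)]
        ring
      rw [if_neg (by omega), if_pos h2, Nat.sub_add_cancel h2]
      split_ifs with h3
      · ring
      · rw [hP m (by omega)]
        ring

lemma coeff_Ttil {k : Type*} [Field k] (n : ℕ) (t : ℤ → k) (d : ℕ) :
    ((∑ i ∈ Finset.range n, C (t (i : ℤ)) * X ^ i)
      + ∑ i ∈ Finset.Ico n (2 * n), C (t ((i : ℤ) - 2 * n)) * X ^ i : k[X]).coeff d =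
    if d < n then t d else if d < 2 * n then t ((d : ℤ) - 2 * n) else 0 := by
  simp only [coeff_add, finsetSum_coeff, coeff_C_mul, coeff_X_pow, mul_ite, mul_one, mul_zero,
    Finset.sum_ite_eq, Finset.mem_range, Finset.mem_Ico]
  split_ifs <;> first | omega | simp

lemma coeff_mul_sum_fin {k : Type*} [Field k] (n : ℕ) (A : k[X]) (u : Fin n → k) (m : ℕ) :
    (A * ∑ j : Fin n, C (u j) * X ^ (j : ℕ)).coeff m =
      ∑ j : Fin n, if (j : ℕ) ≤ m then A.coeff (m - j) * u j else 0 := by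
  rw [Finset.mul_sum, finsetSum_coeff]
  refine Finset.sum_congr rfl fun j _ => ?_
  rw [← mul_assoc, coeff_mul_X_pow']
  simp

lemma coeff_add_coeff {k : Type*} [Field k] (n : ℕ) (t : ℤ → k) (A : k[X])
    (hA : ∀ d : ℕ, A.coeff d =
      if d < n then t d else if d < 2 * n then t ((d : ℤ) - 2 * n) else 0)
    (u : Fin n → k) (m : ℕ) (hm : m < n) :
    (A * ∑ j : Fin n, C (u j) * X ^ (j : ℕ)).coeff m
      + (A * ∑ j : Fin n, C (u j) * X ^ (j : ℕ)).coeff (m + 2 * n) =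
      ∑ j : Fin n, t ((m : ℤ) - (j : ℤ)) * u j := by
  rw [coeff_mul_sum_fin, coeff_mul_sum_fin, ← Finset.sum_add_distrib]
  refine Finset.sum_congr rfl fun j _ => ?_
  have hj := j.isLt
  rw [if_pos (show (j : ℕ) ≤ m + 2 * n by omega), hA, hA]
  rcases le_or_gt (j : ℕ) m with h | h
  · rw [if_pos h, if_pos (by omega), if_neg (by omega), if_neg (by omega), Nat.cast_sub h]
    ring
  · rw [if_neg (by omega), if_neg (by omega), if_pos (by omega), zero_add]
    congr 2
    omega

/-- `T·u = g` iff there exist `v, w` of degree ≤ n-1 with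
`T̃(x)u(x) + x^n v(x) + (x^{2n}-1) w(x) = g(x)`. -/
theorem stmt8 (k : Type*) [Field k] (n : ℕ) (hn : 1 ≤ n) (t : ℤ → k)
    (T : Matrix (Fin n) (Fin n) k) (hT : ∀ i j : Fin n, T i j = t ((i : ℤ) - (j : ℤ)))
    (Ttil : Polynomial k)
    (hTtil : Ttil = (∑ i ∈ Finset.range n, Polynomial.C (t (i : ℤ)) * Polynomial.X ^ i)
      + ∑ i ∈ Finset.Ico n (2 * n), Polynomial.C (t ((i : ℤ) - 2 * n)) * Polynomial.X ^ i)
    (u g : Fin n → k)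
    (U G : Polynomial k)
    (hU : U = ∑ i : Fin n, Polynomial.C (u i) * Polynomial.X ^ (i : ℕ))
    (hG : G = ∑ i : Fin n, Polynomial.C (g i) * Polynomial.X ^ (i : ℕ)) :
    T.mulVec u = g ↔
      ∃ v w : Polynomial k, v.degree < (n : ℕ) ∧ w.degree < (n : ℕ) ∧
        Ttil * U + X ^ n * v + (X ^ (2 * n) - 1) * w = G := by
  have hA := coeff_Ttil n t
  rw [← hTtil] at hA
  have hGc : ∀ m, G.coeff m = if h : m < n then g ⟨m, h⟩ else 0 := by
    intro m
    have h1 := coeff_mul_sum_fin n 1 g m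
    rw [one_mul, ← hG] at h1
    rw [h1]
    split_ifs with h
    · rw [Finset.sum_eq_single ⟨m, h⟩]
      · simp
      · intro j _ hj
        have : (j : ℕ) ≠ m := fun e => hj (Fin.ext e)
        split_ifs with h2
        · rw [coeff_one, if_neg (by omega), zero_mul]
        · rfl
      · simp
    · refine Finset.sum_eq_zero fun j _ => ?_
      have := j.isLt
      rw [if_pos (by omega), coeff_one, if_neg (by omega), zero_mul]
  rw [exists_reduction_iff n (Ttil * U) G ?_ ?_]
  · rw [funext_iff, Fin.forall_iff]
    refine forall₂_congr fun m hm => ?_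
    rw [hU, coeff_add_coeff n t Ttil hA u m hm, hGc, dif_pos hm]
    simp [Matrix.mulVec, dotProduct, hT]
  · intro m hm
    rw [hU, coeff_mul_sum_fin]
    refine Finset.sum_eq_zero fun j _ => ?_
    have := j.isLt
    rw [if_pos (by omega), hA, if_neg (by omega), if_neg (by omega), zero_mul]
  · intro m hm
    rw [hGc, dif_neg (by omega)]
end

section
/- If the Toeplitz matrix T is invertible, then for every vector g ∈ k^n there exists exactly one triple (u(x),v(x),w(x)) ∈ k[x]^3 with all three components of degree ≤ n−1 satisfying T̃(x)u(x) + x^n v(x) + (x^{2n}−1)w(x) = g(x); that is, ML(T̃(x), x^n, x^{2n}−1; g(x)) ∩ k[x]_{n−1}^3 has exactly one element. -/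
open Polynomial

/-!
Write `P = T̃ u`, a polynomial of degree less than `3n`, and cut its coefficients into the blocks
`[0, n)`, `[n, 2n)`, `[2n, 3n)`, so that `P = A + x^n B + x^(2n) C`. The equation
`P + x^n v + (x^(2n) - 1) w = g` then says exactly `v = -B`, `w = -C` and `A + C = g`
(`blocks_iff`). By the choice of `T̃`, the coefficient vector of `A + C` is the Toeplitz matrix `T`
applied to the coefficient vector of `u` (`wrap_coeff`). So `u` is the unique solution of `T u = g`,
and `v`, `w` are determined by `u`.
-/

/-- The polynomial of degree less than `n` with coefficient vector `f`. -/
noncomputable def vecPoly {k : Type*} [Field k] {n : ℕ} (f : Fin n → k) : k[X] :=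
  ∑ i : Fin n, C (f i) * X ^ (i : ℕ)

lemma vecPoly_coeff {k : Type*} [Field k] {n : ℕ} (f : Fin n → k) (d : ℕ) :
    (vecPoly f).coeff d = if h : d < n then f ⟨d, h⟩ else 0 := by
  simp only [vecPoly, finsetSum_coeff, coeff_C_mul_X_pow]
  split_ifs with h
  · rw [Finset.sum_eq_single ⟨d, h⟩]
    · simp
    · intro b _ hb
      rw [if_neg]
      rintro rfl
      exact hb rfl
    · simp
  · apply Finset.sum_eq_zero
    intro b _
    rw [if_neg]
    have := b.2
    omega

lemma vecPoly_degree_lt {k : Type*} [Field k] {n : ℕ} (f : Fin n → k) :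
    (vecPoly f).degree < (n : ℕ) := by
  rw [degree_lt_iff_coeff_zero]
  intro m hm
  rw [vecPoly_coeff, dif_neg (by omega)]

lemma eq_vecPoly {k : Type*} [Field k] {n : ℕ} {p : k[X]} (hp : p.degree < (n : ℕ)) :
    p = vecPoly (fun i : Fin n => p.coeff i) := by
  rw [degree_lt_iff_coeff_zero] at hp
  ext d
  rw [vecPoly_coeff]
  split_ifs with h
  · rfl
  · exact hp d (by omega)

/-- Comparison of coefficients in the three blocks of length `n`. -/
lemma blocks_iff {k : Type*} [Field k] {n : ℕ} {P v w G : k[X]}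
    (hP : ∀ m, 3 * n ≤ m → P.coeff m = 0)
    (hv : v.degree < (n : ℕ)) (hw : w.degree < (n : ℕ)) (hG : G.degree < (n : ℕ)) :
    P + X ^ n * v + (X ^ (2 * n) - 1) * w = G ↔
      ∀ m < n, P.coeff m + P.coeff (m + 2 * n) = G.coeff m ∧
        v.coeff m = -P.coeff (m + n) ∧ w.coeff m = -P.coeff (m + 2 * n) := by
  rw [degree_lt_iff_coeff_zero] at hv hw hG
  have key : ∀ d, (P + X ^ n * v + (X ^ (2 * n) - 1) * w).coeff d =
      P.coeff d + (if n ≤ d then v.coeff (d - n) else 0)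
        + ((if 2 * n ≤ d then w.coeff (d - 2 * n) else 0) - w.coeff d) := by
    intro d
    simp only [sub_mul, one_mul, coeff_add, coeff_sub, coeff_X_pow_mul']
  constructor
  · intro h m hm
    have h0 := key m
    have h1 := key (m + n)
    have h2 := key (m + 2 * n)
    rw [h] at h0 h1 h2
    rw [if_neg (by omega), if_neg (by omega)] at h0
    rw [if_pos (by omega), if_neg (by omega), hG _ (by omega), hw (m + n) (by omega),
      Nat.add_sub_cancel] at h1
    rw [if_pos (by omega), if_pos (by omega), hG _ (by omega), hw (m + 2 * n) (by omega),
      hv _ (by omega), Nat.add_sub_cancel] at h2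
    refine ⟨?_, ?_, ?_⟩
    · linear_combination -h0 - h2
    · linear_combination -h1
    · linear_combination -h2
  · intro h
    ext d
    rw [key]
    by_cases h1 : d < n
    · obtain ⟨a, b, c⟩ := h d h1
      rw [if_neg (by omega), if_neg (by omega)]
      linear_combination a - c
    by_cases h2 : d < 2 * n
    · obtain ⟨a, b, c⟩ := h (d - n) (by omega)
      rw [show d - n + n = d by omega] at b
      rw [if_pos (by omega), if_neg (by omega), hG _ (by omega), hw d (by omega)]
      linear_combination b
    by_cases h3 : d < 3 * n
    · obtain ⟨a, b, c⟩ := h (d - 2 * n) (by omega)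
      rw [show d - 2 * n + 2 * n = d by omega] at c
      rw [if_pos (by omega), if_pos (by omega), hG _ (by omega), hw d (by omega),
        hv _ (by omega)]
      linear_combination c
    · rw [if_pos (by omega), if_pos (by omega), hG _ (by omega), hw d (by omega),
        hv _ (by omega), hw _ (by omega), hP _ (by omega)]
      ring

lemma mul_vecPoly_coeff {k : Type*} [Field k] {n : ℕ} (S : k[X]) (f : Fin n → k) (d : ℕ) :
    (S * vecPoly f).coeff d =
      ∑ j : Fin n, (if (j : ℕ) ≤ d then S.coeff (d - j) else 0) * f j := by
  simp only [vecPoly, Finset.mul_sum, finsetSum_coeff]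
  refine Finset.sum_congr rfl fun j _ => ?_
  rw [← mul_assoc, coeff_mul_X_pow', coeff_mul_C, ite_mul, zero_mul]

/-- Adding the block `[2n, 3n)` of `T̃ u` to the block `[0, n)` yields the vector `T u`: for
`j ≤ m` only `T̃_(m-j) = t_(m-j)` contributes, for `j > m` only `T̃_(2n+m-j) = t_(m-j)`. -/
lemma wrap_coeff {k : Type*} [Field k] {n : ℕ} {t : ℤ → k} {T : Matrix (Fin n) (Fin n) k}
    (hT : ∀ i j : Fin n, T i j = t ((i : ℤ) - (j : ℤ))) {S : k[X]}
    (hS : ∀ d, S.coeff d =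
      if d < n then t d else if d < 2 * n then t ((d : ℤ) - 2 * n) else 0)
    (f : Fin n → k) (m : Fin n) :
    (S * vecPoly f).coeff m + (S * vecPoly f).coeff (m + 2 * n) = T.mulVec f m := by
  rw [mul_vecPoly_coeff, mul_vecPoly_coeff, ← Finset.sum_add_distrib]
  refine Finset.sum_congr rfl fun j _ => ?_
  change _ = T m j * f j
  rw [← add_mul, hT]
  congr 1
  have hj := j.2
  have hm := m.2
  rw [if_pos (show (j : ℕ) ≤ m + 2 * n by omega), hS, hS]
  by_cases h : (j : ℕ) ≤ m
  · rw [if_pos h, if_pos (by omega), if_neg (by omega), if_neg (by omega), add_zero]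
    congr 1
    omega
  · rw [if_neg h, if_neg (by omega), if_pos (by omega), zero_add]
    congr 1
    omega

/-- if `T` is invertible, then for every `g` there is exactly one triple
`(u,v,w)` of polynomials of degree ≤ n-1 with `T̃u + x^n v + (x^{2n}-1)w = g(x)`. -/
theorem stmt10 (k : Type*) [Field k] (n : ℕ) (hn : 1 ≤ n) (t : ℤ → k)
    (T : Matrix (Fin n) (Fin n) k) (hT : ∀ i j : Fin n, T i j = t ((i : ℤ) - (j : ℤ)))
    (Ttil : Polynomial k)
    (hTtil : Ttil = (∑ i ∈ Finset.range n, Polynomial.C (t (i : ℤ)) * Polynomial.X ^ i)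
      + ∑ i ∈ Finset.Ico n (2 * n), Polynomial.C (t ((i : ℤ) - 2 * n)) * Polynomial.X ^ i)
    (hTinv : IsUnit T) :
    ∀ g : Fin n → k,
      ∃! uvw : Polynomial k × Polynomial k × Polynomial k,
        uvw.1.degree < (n : ℕ) ∧ uvw.2.1.degree < (n : ℕ) ∧ uvw.2.2.degree < (n : ℕ) ∧
        Ttil * uvw.1 + X ^ n * uvw.2.1 + (X ^ (2 * n) - 1) * uvw.2.2
          = ∑ i : Fin n, Polynomial.C (g i) * Polynomial.X ^ (i : ℕ) := by
  intro g
  have hS : ∀ d, Ttil.coeff d =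
      if d < n then t d else if d < 2 * n then t ((d : ℤ) - 2 * n) else 0 := by
    intro d
    simp only [hTtil, coeff_add, finsetSum_coeff, coeff_C_mul_X_pow, Finset.sum_ite_eq,
      Finset.mem_range, Finset.mem_Ico]
    by_cases h1 : d < n
    · rw [if_pos h1, if_pos h1, if_neg (by omega), add_zero]
    · by_cases h2 : d < 2 * n
      · rw [if_neg h1, if_neg h1, if_pos (by omega), if_pos h2, zero_add]
      · rw [if_neg h1, if_neg h1, if_neg (by omega), if_neg h2, zero_add]
  have hP : ∀ (f : Fin n → k) (m : ℕ), 3 * n ≤ m → (Ttil * vecPoly f).coeff m = 0 := by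
    intro f m hm
    rw [mul_vecPoly_coeff]
    refine Finset.sum_eq_zero fun j _ => ?_
    have := j.2
    rw [hS, if_neg (show ¬ m - (j : ℕ) < n by omega),
      if_neg (show ¬ m - (j : ℕ) < 2 * n by omega), ite_self, zero_mul]
  obtain ⟨f, hf⟩ := (Matrix.mulVec_surjective_iff_isUnit.mpr hTinv) g
  change ∃! uvw : k[X] × k[X] × k[X], uvw.1.degree < (n : ℕ) ∧ uvw.2.1.degree < (n : ℕ) ∧
    uvw.2.2.degree < (n : ℕ) ∧
    Ttil * uvw.1 + X ^ n * uvw.2.1 + (X ^ (2 * n) - 1) * uvw.2.2 = vecPoly g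
  refine ⟨(vecPoly f, vecPoly fun i : Fin n => -(Ttil * vecPoly f).coeff (i + n),
    vecPoly fun i : Fin n => -(Ttil * vecPoly f).coeff (i + 2 * n)),
    ⟨vecPoly_degree_lt _, vecPoly_degree_lt _, vecPoly_degree_lt _, ?_⟩, ?_⟩
  · refine (blocks_iff (hP f) (vecPoly_degree_lt _) (vecPoly_degree_lt _)
      (vecPoly_degree_lt _)).mpr fun m hm => ⟨?_, ?_, ?_⟩
    · rw [vecPoly_coeff, dif_pos hm, ← hf]
      exact wrap_coeff hT hS f ⟨m, hm⟩
    · rw [vecPoly_coeff, dif_pos hm]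
    · rw [vecPoly_coeff, dif_pos hm]
  · rintro ⟨u, v, w⟩ ⟨hu, hv, hw, h⟩
    dsimp only at hu hv hw h
    obtain ⟨f', rfl⟩ : ∃ f' : Fin n → k, u = vecPoly f' := ⟨_, eq_vecPoly hu⟩
    rw [blocks_iff (hP f') hv hw (vecPoly_degree_lt _)] at h
    have hff : f' = f := by
      apply Matrix.mulVec_injective_iff_isUnit.mpr hTinv
      rw [hf]
      ext m
      rw [← wrap_coeff hT hS f' m, (h m m.2).1, vecPoly_coeff, dif_pos m.2]
    subst hff
    refine Prod.ext rfl (Prod.ext ?_ ?_)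
    · refine (eq_vecPoly hv).trans (congrArg vecPoly (funext fun i => ?_))
      exact (h i i.2).2.1
    · refine (eq_vecPoly hw).trans (congrArg vecPoly (funext fun i => ?_))
      exact (h i i.2).2.2
end

section
/- Let B(x) = ((e(x), e'(x)), (f(x), f'(x))) be a 2×2 matrix of polynomials over k, each entry of degree ≤ n, such that the 2×2 matrix of coefficients of x^n, ((e_n, e'_n), (f_n, f'_n)), is invertible. Let E(x) = (p(x), q(x)) ∈ k[x]^2 with both components of degree ≤ m, where m ≥ n. Then there exist a unique vector Q(x) ∈ k[x]^2 with components of degree ≤ m−n and a unique vector R(x) ∈ k[x]^2 with components of degree ≤ n−1 such that E(x) = B(x)·Q(x) + R(x). -/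
/-!
The proof is long division from the top coefficient down. If `deg a, deg b ≤ d`, the coefficient
of `x ^ (n + d)` in `B · (a, b)` is the invertible matrix of `x ^ n`-coefficients of `B` applied to
`(a_d, b_d)`. Solving this `2 × 2` linear system cancels the top coefficients of the dividend
(existence, `exists_quotient`), and its injectivity forces a quotient whose product with `B` has
degree `< n` to vanish one coefficient at a time (uniqueness, `quotient_eq_zero`).
-/

open Polynomial

section

variable {k : Type*} [Field k] {n : ℕ}

lemma degree_lt_of_degree_lt_succ {p : k[X]} {d : ℕ} (hp : p.degree < (d + 1 : ℕ))
    (h : p.coeff d = 0) : p.degree < (d : ℕ) := by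
  rw [degree_lt_iff_coeff_zero] at hp ⊢
  intro i hi
  rcases hi.eq_or_lt with rfl | hi
  · exact h
  · exact hp i hi

lemma degree_le_of_degree_lt_succ {p : k[X]} {d : ℕ} (hp : p.degree < (d + 1 : ℕ)) :
    p.degree ≤ (d : ℕ) :=
  degree_le_iff_coeff_zero _ _ |>.2 fun i hi =>
    (degree_lt_iff_coeff_zero _ _).1 hp i (by exact_mod_cast hi)

lemma degree_lt_succ_of_degree_le {p : k[X]} {d : ℕ} (hp : p.degree ≤ (d : ℕ)) :
    p.degree < (d + 1 : ℕ) :=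
  hp.trans_lt (by exact_mod_cast Nat.lt_succ_self d)

lemma coeff_combination {e e' a b : k[X]} {d : ℕ} (he : e.degree ≤ (n : ℕ))
    (he' : e'.degree ≤ (n : ℕ)) (ha : a.degree ≤ (d : ℕ)) (hb : b.degree ≤ (d : ℕ)) :
    (e * a + e' * b).coeff (n + d) = e.coeff n * a.coeff d + e'.coeff n * b.coeff d := by
  rw [coeff_add,
    coeff_mul_add_eq_of_natDegree_le (natDegree_le_of_degree_le he) (natDegree_le_of_degree_le ha),
    coeff_mul_add_eq_of_natDegree_le (natDegree_le_of_degree_le he')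
      (natDegree_le_of_degree_le hb)]

lemma degree_combination_lt {e e' a b : k[X]} {d : ℕ} (he : e.degree ≤ (n : ℕ))
    (he' : e'.degree ≤ (n : ℕ)) (ha : a.degree ≤ (d : ℕ)) (hb : b.degree ≤ (d : ℕ)) :
    (e * a + e' * b).degree < (n + d + 1 : ℕ) := by
  apply degree_lt_succ_of_degree_le
  push_cast
  exact (degree_add_le _ _).trans (max_le (degree_mul_le_of_le he ha) (degree_mul_le_of_le he' hb))

variable {e e' f f' : k[X]}

/-- Uniqueness of the quotient, in homogeneous form. -/
lemma quotient_eq_zero (he : e.degree ≤ (n : ℕ)) (he' : e'.degree ≤ (n : ℕ))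
    (hf : f.degree ≤ (n : ℕ)) (hf' : f'.degree ≤ (n : ℕ))
    (hD : e.coeff n * f'.coeff n - e'.coeff n * f.coeff n ≠ 0) (a b : k[X]) (d : ℕ)
    (ha : a.degree < (d : ℕ)) (hb : b.degree < (d : ℕ))
    (hr : (e * a + e' * b).degree < (n : ℕ)) (hs : (f * a + f' * b).degree < (n : ℕ)) :
    a = 0 ∧ b = 0 := by
  induction d with
  | zero =>
    simpa [degree_lt_iff_coeff_zero, Polynomial.ext_iff] using And.intro ha hb
  | succ d ih =>
    have ha' := degree_le_of_degree_lt_succ ha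
    have hb' := degree_le_of_degree_lt_succ hb
    have h1 := coeff_combination he he' ha' hb'
    have h2 := coeff_combination hf hf' ha' hb'
    rw [(degree_lt_iff_coeff_zero _ _).1 hr _ (Nat.le_add_right n d)] at h1
    rw [(degree_lt_iff_coeff_zero _ _).1 hs _ (Nat.le_add_right n d)] at h2
    refine ih (degree_lt_of_degree_lt_succ ha ?_) (degree_lt_of_degree_lt_succ hb ?_)
    · refine (mul_eq_zero.1 ?_).resolve_left hD
      linear_combination e'.coeff n * h2 - f'.coeff n * h1
    · refine (mul_eq_zero.1 ?_).resolve_left hD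
      linear_combination f.coeff n * h1 - e.coeff n * h2

lemma exists_quotient (he : e.degree ≤ (n : ℕ)) (he' : e'.degree ≤ (n : ℕ))
    (hf : f.degree ≤ (n : ℕ)) (hf' : f'.degree ≤ (n : ℕ))
    (hD : e.coeff n * f'.coeff n - e'.coeff n * f.coeff n ≠ 0) (d : ℕ) (p q : k[X])
    (hp : p.degree < (n + d : ℕ)) (hq : q.degree < (n + d : ℕ)) :
    ∃ a b : k[X], a.degree < (d : ℕ) ∧ b.degree < (d : ℕ) ∧
      (p - (e * a + e' * b)).degree < (n : ℕ) ∧ (q - (f * a + f' * b)).degree < (n : ℕ) := by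
  induction d generalizing p q with
  | zero => exact ⟨0, 0, by simp, by simp, by simpa using hp, by simpa using hq⟩
  | succ d ih =>
    -- Cramer's rule for the leading coefficients `u`, `v` of the quotient.
    obtain ⟨u, v, hu, hv⟩ : ∃ u v : k, e.coeff n * u + e'.coeff n * v = p.coeff (n + d) ∧
        f.coeff n * u + f'.coeff n * v = q.coeff (n + d) := by
      refine ⟨(f'.coeff n * p.coeff (n + d) - e'.coeff n * q.coeff (n + d)) /
          (e.coeff n * f'.coeff n - e'.coeff n * f.coeff n),
        (e.coeff n * q.coeff (n + d) - f.coeff n * p.coeff (n + d)) /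
          (e.coeff n * f'.coeff n - e'.coeff n * f.coeff n), ?_, ?_⟩
      · rw [mul_div_assoc', mul_div_assoc', ← add_div, div_eq_iff hD]
        ring
      · rw [mul_div_assoc', mul_div_assoc', ← add_div, div_eq_iff hD]
        ring
    have hu' : (monomial d u).degree ≤ (d : ℕ) := degree_monomial_le d u
    have hv' : (monomial d v).degree ≤ (d : ℕ) := degree_monomial_le d v
    have key : ∀ {g g' s : k[X]}, g.degree ≤ (n : ℕ) → g'.degree ≤ (n : ℕ) →
        s.degree < (n + (d + 1) : ℕ) → g.coeff n * u + g'.coeff n * v = s.coeff (n + d) →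
        (s - (g * monomial d u + g' * monomial d v)).degree < (n + d : ℕ) := by
      intro g g' s hg hg' hs h
      apply degree_lt_of_degree_lt_succ
      · exact (degree_sub_le _ _).trans_lt (max_lt hs (degree_combination_lt hg hg' hu' hv'))
      · rw [coeff_sub, coeff_combination hg hg' hu' hv', coeff_monomial_same,
          coeff_monomial_same, h, sub_self]
    obtain ⟨a, b, ha, hb, hr, hs⟩ := ih _ _ (key he he' hp hu) (key hf hf' hq hv)
    have hd : ((d : ℕ) : WithBot ℕ) < (d + 1 : ℕ) := by exact_mod_cast Nat.lt_succ_self d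
    refine ⟨monomial d u + a, monomial d v + b,
      (degree_add_le _ _).trans_lt (max_lt (hu'.trans_lt hd) (ha.trans hd)),
      (degree_add_le _ _).trans_lt (max_lt (hv'.trans_lt hd) (hb.trans hd)), ?_, ?_⟩
    · convert hr using 2
      ring
    · convert hs using 2
      ring

end

/-- generalized Euclidean division of a polynomial vector by a `2×2`
polynomial matrix whose matrix of `x^n`-coefficients is invertible: unique quotient `Q`
of degree ≤ m-n and unique remainder `R` of degree ≤ n-1. -/
theorem stmt14 (k : Type*) [Field k] (n m : ℕ) (hmn : n ≤ m)
    (e e' f f' : Polynomial k)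
    (he : e.degree ≤ (n : ℕ)) (he' : e'.degree ≤ (n : ℕ))
    (hf : f.degree ≤ (n : ℕ)) (hf' : f'.degree ≤ (n : ℕ))
    (hcoeff : IsUnit (Matrix.of ![![e.coeff n, e'.coeff n], ![f.coeff n, f'.coeff n]]))
    (p q : Polynomial k) (hp : p.degree ≤ (m : ℕ)) (hq : q.degree ≤ (m : ℕ)) :
    ∃! QR : (Polynomial k × Polynomial k) × Polynomial k × Polynomial k,
      QR.1.1.degree ≤ ((m - n : ℕ) : WithBot ℕ) ∧ QR.1.2.degree ≤ ((m - n : ℕ) : WithBot ℕ) ∧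
      QR.2.1.degree < (n : ℕ) ∧ QR.2.2.degree < (n : ℕ) ∧
      p = e * QR.1.1 + e' * QR.1.2 + QR.2.1 ∧
      q = f * QR.1.1 + f' * QR.1.2 + QR.2.2 := by
  have hD : e.coeff n * f'.coeff n - e'.coeff n * f.coeff n ≠ 0 := by
    simpa [Matrix.isUnit_iff_isUnit_det, Matrix.det_fin_two] using hcoeff
  have hm : m + 1 = n + (m - n + 1) := by omega
  have hp' := degree_lt_succ_of_degree_le hp
  have hq' := degree_lt_succ_of_degree_le hq
  rw [hm] at hp' hq'
  obtain ⟨a, b, ha, hb, hr, hs⟩ := exists_quotient he he' hf hf' hD _ p q hp' hq'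
  refine ⟨((a, b), (p - (e * a + e' * b), q - (f * a + f' * b))),
    ⟨degree_le_of_degree_lt_succ ha, degree_le_of_degree_lt_succ hb, hr, hs,
      by ring, by ring⟩, ?_⟩
  rintro ⟨⟨a', b'⟩, r', s'⟩ ⟨ha', hb', hr', hs', h1, h2⟩
  dsimp only at ha' hb' hr' hs' h1 h2
  have hz := quotient_eq_zero he he' hf hf' hD (a' - a) (b' - b) (m - n + 1)
    ((degree_sub_le _ _).trans_lt (max_lt (degree_lt_succ_of_degree_le ha') ha))
    ((degree_sub_le _ _).trans_lt (max_lt (degree_lt_succ_of_degree_le hb') hb))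
    (by
      have h : e * (a' - a) + e' * (b' - b) = (p - (e * a + e' * b)) - r' := by
        linear_combination -h1
      rw [h]
      exact (degree_sub_le _ _).trans_lt (max_lt hr hr'))
    (by
      have h : f * (a' - a) + f' * (b' - b) = (q - (f * a + f' * b)) - s' := by
        linear_combination -h2
      rw [h]
      exact (degree_sub_le _ _).trans_lt (max_lt hs hs'))
  obtain rfl := sub_eq_zero.1 hz.1
  obtain rfl := sub_eq_zero.1 hz.2
  have h3 : r' = p - (e * a' + e' * b') := by linear_combination -h1
  have h4 : s' = q - (f * a' + f' * b') := by linear_combination -h2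
  rw [h3, h4]
end
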